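/- arXiv:2507.20877 — 2 statements merged into one kernel-verified Lean document; each statement's English description precedes it below -/
import Mathlib

section
/- Let f : (0,∞) → ℝ be a nonnegative, monotone decreasing function and let L > 0, κ > 0. Then the sum of f(|p|) over lattice points p ∈ (2π/L)ℤ³ with |p| ≥ κ is bounded above by (L/(2π))³ ∫_{|p| ≥ max(κ − √3·(2π/L), 0)} f(|p|)(1 + 3π/(L|p|) + 6π/(L²|p|²)) dp. -/
open MeasureTheory Real ENNReal

/-- The lattice point of `(2π/L)ℤ³` corresponding to `p ∈ ℤ³`, viewed in `ℝ³`. -/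
noncomputable def latticePoint (L : ℝ) (p : Fin 3 → ℤ) : EuclideanSpace ℝ (Fin 3) :=
  (WithLp.equiv 2 (Fin 3 → ℝ)).symm (fun i => (2 * Real.pi / L) * (p i : ℝ))

/-- Polar coordinates for the lower Lebesgue integral of a radial function. -/
theorem lintegral_fun_norm_addHaar {E : Type*} [NormedAddCommGroup E] [NormedSpace ℝ E]
    [FiniteDimensional ℝ E] [Nontrivial E] [MeasurableSpace E] [BorelSpace E] (μ : Measure E)
    [μ.IsAddHaarMeasure] {F : ℝ → ℝ≥0∞} (hF : Measurable F) :
    ∫⁻ x, F ‖x‖ ∂μ = Module.finrank ℝ E * μ (Metric.ball 0 1) *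
      ∫⁻ r in Set.Ioi (0 : ℝ), ENNReal.ofReal (r ^ (Module.finrank ℝ E - 1)) * F r := by
  have hFv : Measurable fun r : Set.Ioi (0 : ℝ) => F r := hF.comp measurable_subtype_coe
  calc
    ∫⁻ x, F ‖x‖ ∂μ = ∫⁻ x : ({(0)}ᶜ : Set E), F ‖x.1‖ ∂(μ.comap (↑)) := by
      rw [lintegral_subtype_comap (measurableSet_singleton _).compl fun x ↦ F ‖x‖,
        restrict_compl_singleton]
    _ = ∫⁻ x, F x.2 ∂μ.toSphere.prod (.volumeIoiPow (Module.finrank ℝ E - 1)) := by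
      have := μ.measurePreserving_homeomorphUnitSphereProd.lintegral_comp_emb
        (Homeomorph.measurableEmbedding _) (F ∘ Subtype.val ∘ Prod.snd)
      simpa using this
    _ = μ.toSphere Set.univ *
        ∫⁻ x : Set.Ioi (0 : ℝ), F x ∂.volumeIoiPow (Module.finrank ℝ E - 1) := by
      rw [lintegral_prod _ (by fun_prop)]
      simp [mul_comm]
    _ = _ := by
      rw [μ.toSphere_apply_univ, Measure.volumeIoiPow,
        lintegral_withDensity_eq_lintegral_mul _ (by fun_prop) hFv]
      congr 1
      exact lintegral_subtype_comap measurableSet_Ioi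
        fun r => ENNReal.ofReal (r ^ (Module.finrank ℝ E - 1)) * F r

/-- The half-open cube of side `a` with lower corner `a • k`. -/
def latticeCell {ι : Type*} (a : ℝ) (k : ι → ℤ) : Set (EuclideanSpace ℝ ι) :=
  {x | ∀ i, x i ∈ Set.Ico (a * k i) (a * (k i + 1))}

theorem latticeCell_eq_preimage {ι : Type*} (a : ℝ) (k : ι → ℤ) :
    latticeCell a k = WithLp.ofLp ⁻¹'
      (Set.univ.pi fun i => Set.Ico (a * (k i : ℝ)) (a * (k i + 1))) := by
  ext x
  simp [latticeCell]

theorem measurableSet_latticeCell {ι : Type*} [Fintype ι] (a : ℝ) (k : ι → ℤ) : MeasurableSet (latticeCell a k) := by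
  rw [latticeCell_eq_preimage]
  exact (PiLp.volume_preserving_ofLp ι).measurable
    (MeasurableSet.univ_pi fun i => measurableSet_Ico)

theorem volume_latticeCell {ι : Type*} [Fintype ι] (a : ℝ) (k : ι → ℤ) :
    volume (latticeCell a k) = ENNReal.ofReal a ^ Fintype.card ι := by
  rw [latticeCell_eq_preimage, (PiLp.volume_preserving_ofLp ι).measure_preimage
    (MeasurableSet.univ_pi fun i => measurableSet_Ico).nullMeasurableSet, volume_pi_pi]
  simp [Real.volume_Ico, mul_add]

theorem disjoint_latticeCell {ι : Type*} {a : ℝ} (ha : 0 < a) {k l : ι → ℤ} (h : k ≠ l) :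
    Disjoint (latticeCell a k) (latticeCell a l) := by
  rw [Set.disjoint_left]
  intro x hx hy
  apply h
  funext i
  have floor_eq : ∀ m : ι → ℤ, x ∈ latticeCell a m → ⌊x i / a⌋ = m i := fun m hm => by
    rw [Int.floor_eq_iff, le_div_iff₀ ha, div_lt_iff₀ ha]
    have := hm i
    exact ⟨by linarith [this.1], by linarith [this.2]⟩
  rw [← floor_eq k hx, floor_eq l hy]

/-- The index of the unit interval adjacent to `n ≠ 0` on the side of the origin. -/
def inwardCell (n : ℤ) : ℤ := if 0 < n then n - 1 else n

theorem inwardCell_injOn : Set.InjOn inwardCell {n | n ≠ 0} := by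
  intro m hm n hn h
  simp only [Set.mem_ofPred_eq, inwardCell] at *
  split_ifs at h <;> omega

theorem abs_le_of_mem_inwardCell {a t : ℝ} (ha : 0 < a) {n : ℤ} (hn : n ≠ 0)
    (ht : t ∈ Set.Ico (a * inwardCell n) (a * (inwardCell n + 1))) :
    |t| ≤ |a * n| ∧ |a * n - t| ≤ a := by
  obtain ⟨h1, h2⟩ := ht
  rcases lt_or_gt_of_ne hn with h | h
  · have h3 : (n : ℝ) + 1 ≤ 0 := by exact_mod_cast h
    have h4 : a * (n + 1) ≤ 0 := mul_nonpos_of_nonneg_of_nonpos ha.le h3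
    simp only [inwardCell, not_lt.2 h.le, if_false] at h1 h2
    rw [abs_of_nonpos (by linarith), abs_of_nonpos (by linarith), abs_of_nonpos (by linarith)]
    constructor <;> linarith
  · have h3 : (0 : ℝ) ≤ n - 1 := by
      have : (1 : ℝ) ≤ n := by exact_mod_cast h
      linarith
    have h4 : 0 ≤ a * (n - 1) := mul_nonneg ha.le h3
    simp only [inwardCell, h, if_true] at h1 h2
    push_cast at h1 h2
    rw [abs_of_nonneg (by linarith), abs_of_nonneg (by linarith), abs_of_nonneg (by linarith)]
    constructor <;> linarith

theorem EuclideanSpace.norm_le_norm_of_abs_le {ι : Type*} [Fintype ι] {x y : EuclideanSpace ℝ ι}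
    (h : ∀ i, |x i| ≤ |y i|) : ‖x‖ ≤ ‖y‖ := by
  rw [EuclideanSpace.norm_eq, EuclideanSpace.norm_eq]
  refine Real.sqrt_le_sqrt (Finset.sum_le_sum fun i _ => ?_)
  exact pow_le_pow_left₀ (norm_nonneg _) (h i) 2

theorem EuclideanSpace.norm_le_sqrt_card_mul {ι : Type*} [Fintype ι] {x : EuclideanSpace ℝ ι}
    {a : ℝ} (ha : 0 ≤ a) (h : ∀ i, |x i| ≤ a) : ‖x‖ ≤ √(Fintype.card ι) * a := by
  rw [EuclideanSpace.norm_eq, ← Real.sqrt_sq ha, ← Real.sqrt_mul (Nat.cast_nonneg _)]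
  refine Real.sqrt_le_sqrt ?_
  rw [← nsmul_eq_mul]
  exact Finset.sum_le_card_nsmul _ _ _ fun i _ => pow_le_pow_left₀ (norm_nonneg _) (h i) 2

/-- Comparison of a radial sum over lattice points off the coordinate hyperplanes with an
integral, using for every point the adjacent cell on the side of the origin. -/
theorem tsum_lattice_le_lintegral {ι : Type*} [Fintype ι] {a : ℝ} (ha : 0 < a)
    {G H : ℝ → ℝ≥0∞}
    (hGH : ∀ r s, 0 ≤ r → r ≤ s → s ≤ r + √(Fintype.card ι) * a → G s ≤ H r) :
    (∑' q : {q : ι → ℤ // ∀ i, q i ≠ 0}, G ‖WithLp.toLp 2 fun i => a * (q.1 i : ℝ)‖) *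
      ENNReal.ofReal a ^ Fintype.card ι ≤ ∫⁻ x : EuclideanSpace ℝ ι, H ‖x‖ := by
  let C (q : {q : ι → ℤ // ∀ i, q i ≠ 0}) : Set (EuclideanSpace ℝ ι) :=
    latticeCell a fun i => inwardCell (q.1 i)
  have hdisj : Pairwise (Function.onFun Disjoint C) := fun p q hpq =>
    disjoint_latticeCell ha fun h => hpq <| Subtype.ext <| funext fun i =>
      inwardCell_injOn (p.2 i) (q.2 i) (congrFun h i)
  calc
    _ = ∑' q : {q : ι → ℤ // ∀ i, q i ≠ 0},
          ∫⁻ _ in C q, G ‖WithLp.toLp 2 fun i => a * (q.1 i : ℝ)‖ := by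
      rw [← ENNReal.tsum_mul_right]
      simp [C, volume_latticeCell]
    _ ≤ ∑' q, ∫⁻ x in C q, H ‖x‖ := by
      refine ENNReal.tsum_le_tsum fun q =>
        setLIntegral_mono' (measurableSet_latticeCell _ _) fun x hx => ?_
      have hx' := fun i => abs_le_of_mem_inwardCell ha (q.2 i) (hx i)
      refine hGH _ _ (norm_nonneg _)
        (EuclideanSpace.norm_le_norm_of_abs_le fun i => (hx' i).1) ?_
      have := EuclideanSpace.norm_le_sqrt_card_mul
        (x := (WithLp.toLp 2 fun i => a * (q.1 i : ℝ)) - x) ha.le fun i => (hx' i).2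
      linarith [norm_le_norm_add_norm_sub' (WithLp.toLp 2 fun i => a * (q.1 i : ℝ)) x]
    _ = ∫⁻ x in ⋃ q, C q, H ‖x‖ :=
      (lintegral_iUnion (fun q => measurableSet_latticeCell _ _) hdisj _).symm
    _ ≤ _ := setLIntegral_le_lintegral _ _

/-- Splitting a radial lattice sum according to the set of nonzero coordinates. -/
theorem tsum_lattice_le_sum_support {ι : Type*} [Fintype ι] [DecidableEq ι] (a : ℝ)
    (G : ℝ → ℝ≥0∞) :
    ∑' p : ι → ℤ, G ‖WithLp.toLp 2 fun i => a * (p i : ℝ)‖ ≤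
      ∑ S : Finset ι, ∑' q : {q : S → ℤ // ∀ i, q i ≠ 0},
        G ‖WithLp.toLp 2 fun i => a * (q.1 i : ℝ)‖ := by
  let F (p : ι → ℤ) : ℝ≥0∞ := G ‖WithLp.toLp 2 fun i => a * (p i : ℝ)‖
  let supp (p : ι → ℤ) : Finset ι := {i | p i ≠ 0}
  calc
    ∑' p, F p = ∑' p, ∑ S : Finset ι, {p | supp p = S}.indicator F p := by
      refine tsum_congr fun p => ?_
      simp [Set.indicator_apply]
    _ = ∑ S : Finset ι, ∑' p : {p | supp p = S}, F p := by
      rw [Summable.tsum_finsetSum fun _ _ => ENNReal.summable]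
      simp only [tsum_subtype]
    _ ≤ _ := by
      refine Finset.sum_le_sum fun S _ => ?_
      have hne (p : {p | supp p = S}) (i : S) : p.1 i ≠ 0 := by
        have h : i.1 ∈ supp p.1 := p.2.symm ▸ i.2
        simpa [supp] using h
      have hzero (p : {p | supp p = S}) (i : ι) (hi : i ∉ S) : p.1 i = 0 := by
        have h : i ∉ supp p.1 := p.2.symm ▸ hi
        simpa [supp] using h
      let e (p : {p | supp p = S}) : {q : S → ℤ // ∀ i, q i ≠ 0} :=
        ⟨fun i => p.1 i, hne p⟩
      have he : Function.Injective e := by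
        intro p q h
        refine Subtype.ext (funext fun i => ?_)
        by_cases hi : i ∈ S
        · exact congrFun (congrArg Subtype.val h) ⟨i, hi⟩
        · rw [hzero p i hi, hzero q i hi]
      refine le_trans (le_of_eq (tsum_congr fun p => ?_))
        (ENNReal.tsum_comp_le_tsum_of_injective he _)
      simp only [F, e, EuclideanSpace.norm_eq]
      congr 2
      rw [← Finset.sum_subset (Finset.subset_univ S)]
      · exact (Finset.sum_coe_sort S fun i => ‖a * (p.1 i : ℝ)‖ ^ 2).symm
      · intro i _ hi
        simp [hzero p i hi]

/-- The surface area of the unit sphere in `ℝᵈ`. -/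
noncomputable def unitSphereArea (d : ℕ) : ℝ := d * (√π ^ d / Real.Gamma (d / 2 + 1))

theorem unitSphereArea_zero : unitSphereArea 0 = 0 := by
  simp [unitSphereArea]

theorem unitSphereArea_one : unitSphereArea 1 = 2 := by
  have hπ : √π ≠ 0 := (Real.sqrt_pos.2 Real.pi_pos).ne'
  rw [unitSphereArea, Nat.cast_one, Real.Gamma_add_one (by norm_num), Real.Gamma_one_half_eq]
  field_simp

theorem unitSphereArea_two : unitSphereArea 2 = 2 * π := by
  norm_num [unitSphereArea, Real.sq_sqrt Real.pi_pos.le]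

theorem unitSphereArea_three : unitSphereArea 3 = 4 * π := by
  have hπ : √π ≠ 0 := (Real.sqrt_pos.2 Real.pi_pos).ne'
  have h : Real.Gamma (3 / 2 + 1) = 3 / 4 * √π := by
    rw [Real.Gamma_add_one (by norm_num), show (3 / 2 : ℝ) = 1 / 2 + 1 by norm_num,
      Real.Gamma_add_one (by norm_num), Real.Gamma_one_half_eq]
    ring
  have hsq : √π ^ 2 = π := Real.sq_sqrt Real.pi_pos.le
  rw [unitSphereArea, Nat.cast_ofNat, h]
  field_simp
  rw [hsq]

theorem EuclideanSpace.lintegral_fun_norm {ι : Type*} [Fintype ι] [Nonempty ι] {F : ℝ → ℝ≥0∞}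
    (hF : Measurable F) :
    ∫⁻ x : EuclideanSpace ℝ ι, F ‖x‖ = ENNReal.ofReal (unitSphereArea (Fintype.card ι)) *
      ∫⁻ r in Set.Ioi (0 : ℝ), ENNReal.ofReal (r ^ (Fintype.card ι - 1)) * F r := by
  rw [lintegral_fun_norm_addHaar _ hF, EuclideanSpace.volume_ball, finrank_euclideanSpace,
    unitSphereArea, ENNReal.ofReal_mul (Nat.cast_nonneg _), ENNReal.ofReal_natCast,
    ENNReal.ofReal_one, one_pow, one_mul]

/-- A radial lattice sum in `ℝ^ι` is bounded by one-dimensional radial integrals, one for each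
coordinate subspace. -/
theorem tsum_lattice_le_sum_radial {ι : Type*} [Fintype ι] {a : ℝ} (ha : 0 < a)
    {G H : ℝ → ℝ≥0∞} (hG0 : G 0 = 0) (hH : Measurable H)
    (hGH : ∀ r s, 0 ≤ r → r ≤ s → s ≤ r + √(Fintype.card ι) * a → G s ≤ H r) :
    ∑' p : ι → ℤ, G ‖WithLp.toLp 2 fun i => a * (p i : ℝ)‖ ≤
      ∑ d ∈ Finset.range (Fintype.card ι + 1), (Fintype.card ι).choose d •
        (ENNReal.ofReal (unitSphereArea d / a ^ d) *
          ∫⁻ r in Set.Ioi (0 : ℝ), ENNReal.ofReal (r ^ (d - 1)) * H r) := by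
  classical
  refine (tsum_lattice_le_sum_support a G).trans ?_
  rw [← Finset.card_univ, ← Finset.sum_powerset_apply_card (fun d =>
    ENNReal.ofReal (unitSphereArea d / a ^ d) *
      ∫⁻ r in Set.Ioi (0 : ℝ), ENNReal.ofReal (r ^ (d - 1)) * H r), Finset.powerset_univ]
  refine Finset.sum_le_sum fun S _ => ?_
  rcases S.eq_empty_or_nonempty with rfl | hS
  · simp [EuclideanSpace.norm_eq, hG0]
  · have : Nonempty S := hS.to_subtype
    have hle := tsum_lattice_le_lintegral (ι := S) ha (G := G) (H := H)
      fun r s hr hrs hs => hGH r s hr hrs <| hs.trans <| by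
        gcongr
        exact Fintype.card_subtype_le _
    rw [EuclideanSpace.lintegral_fun_norm hH, Fintype.card_coe] at hle
    rw [ENNReal.ofReal_div_of_pos (pow_pos ha _), ENNReal.ofReal_pow ha.le, div_eq_mul_inv,
      mul_right_comm, ← div_eq_mul_inv]
    exact ENNReal.le_div_iff_mul_le (by simp [ha]) (by simp) |>.2 hle

/-- upper bound for a lattice Riemann sum of a nonnegative decreasing
radial function by an integral over `{|p| ≥ [κ − √3(2π/L)]₊}`, in the extended reals. -/
theorem stmt_1 (f : ℝ → ℝ) (hf0 : ∀ x ∈ Set.Ioi (0:ℝ), 0 ≤ f x)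
    (hmono : AntitoneOn f (Set.Ioi 0)) (L κ : ℝ) (hL : 0 < L) (hκ : 0 < κ) :
    (∑' p : Fin 3 → ℤ,
      if κ ≤ ‖latticePoint L p‖ then ENNReal.ofReal (f ‖latticePoint L p‖) else 0) ≤
    ENNReal.ofReal ((L / (2 * Real.pi)) ^ 3) *
      ∫⁻ p in {p : EuclideanSpace ℝ (Fin 3) |
          max (κ - Real.sqrt 3 * (2 * Real.pi / L)) 0 ≤ ‖p‖},
        ENNReal.ofReal (f ‖p‖ *
          (1 + 3 * Real.pi / (L * ‖p‖) + 6 * Real.pi / (L ^ 2 * ‖p‖ ^ 2))) ∂volume := by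
  set a : ℝ := 2 * Real.pi / L with ha_def
  have ha : 0 < a := by positivity
  set c : ℝ := max (κ - √3 * a) 0
  let g (r : ℝ) : ℝ≥0∞ := if 0 < r then ENNReal.ofReal (f r) else ⊤
  have hg : Antitone g := fun r s hrs => by
    by_cases hr : 0 < r
    · simp only [g, hr, hr.trans_le hrs, if_true]
      exact ENNReal.ofReal_le_ofReal (hmono hr (hr.trans_le hrs) hrs)
    · simp [g, hr]
  let G (r : ℝ) : ℝ≥0∞ := if κ ≤ r then ENNReal.ofReal (f r) else 0
  let H : ℝ → ℝ≥0∞ := (Set.Ici c).indicator g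
  have hH : Measurable H := hg.measurable.indicator measurableSet_Ici
  have hGH (r s : ℝ) (hr : 0 ≤ r) (hrs : r ≤ s) (hs : s ≤ r + √(Fintype.card (Fin 3)) * a) :
      G s ≤ H r := by
    by_cases hκs : κ ≤ s
    · have hs' : s ≤ r + √3 * a := by simpa using hs
      have hcr : r ∈ Set.Ici c := max_le (by linarith) hr
      simp only [G, H, hκs, if_true, Set.indicator_of_mem hcr]
      calc ENNReal.ofReal (f s) = g s := by simp [g, hκ.trans_le hκs]
        _ ≤ g r := hg hrs
    · simp [G, hκs]
  let J (n : ℕ) : ℝ≥0∞ := ∫⁻ r in Set.Ioi (0 : ℝ), ENNReal.ofReal (r ^ n) * H r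
  have hsum := tsum_lattice_le_sum_radial ha (by simp [G, hκ]) hH hGH
  simp only [Fintype.card_fin, Finset.sum_range_succ, Finset.range_zero, Finset.sum_empty,
    unitSphereArea_zero, unitSphereArea_one, unitSphereArea_two, unitSphereArea_three] at hsum
  let w (r : ℝ) : ℝ := 1 + 3 * Real.pi / (L * r) + 6 * Real.pi / (L ^ 2 * r ^ 2)
  have hw : Measurable fun r => ENNReal.ofReal (w r) := by fun_prop
  have hset : MeasurableSet {p : EuclideanSpace ℝ (Fin 3) | c ≤ ‖p‖} :=
    measurableSet_le measurable_const measurable_norm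
  have hint : ∫⁻ p in {p : EuclideanSpace ℝ (Fin 3) | c ≤ ‖p‖},
      ENNReal.ofReal (f ‖p‖ * w ‖p‖) = ENNReal.ofReal (4 * π) *
        (J 2 + ENNReal.ofReal (3 * π / L) * J 1 + ENNReal.ofReal (6 * π / L ^ 2) * J 0) := by
    have hmeas (n : ℕ) : Measurable fun r => ENNReal.ofReal (r ^ n) * H r :=
      (by fun_prop : Measurable fun r : ℝ => ENNReal.ofReal (r ^ n)).mul hH
    calc
      _ = ∫⁻ p : EuclideanSpace ℝ (Fin 3), H ‖p‖ * ENNReal.ofReal (w ‖p‖) := by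
        rw [← lintegral_indicator hset]
        refine lintegral_congr_ae ?_
        filter_upwards [Measure.ae_ne volume (0 : EuclideanSpace ℝ (Fin 3))] with p hp
        have hp' : 0 < ‖p‖ := norm_pos_iff.2 hp
        by_cases hcp : c ≤ ‖p‖
        · simp [H, g, hcp, hp, ENNReal.ofReal_mul (hf0 _ hp')]
        · simp [H, hcp]
      _ = ENNReal.ofReal (4 * π) * ∫⁻ r in Set.Ioi (0 : ℝ),
            ENNReal.ofReal (r ^ 2) * (H r * ENNReal.ofReal (w r)) := by
        have := EuclideanSpace.lintegral_fun_norm (ι := Fin 3) (hH.mul hw)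
        rwa [Fintype.card_fin, unitSphereArea_three] at this
      _ = ENNReal.ofReal (4 * π) * ∫⁻ r in Set.Ioi (0 : ℝ), (ENNReal.ofReal (r ^ 2) * H r +
            ENNReal.ofReal (3 * π / L) * (ENNReal.ofReal (r ^ 1) * H r) +
            ENNReal.ofReal (6 * π / L ^ 2) * (ENNReal.ofReal (r ^ 0) * H r)) := by
        congr 1
        refine setLIntegral_congr_fun measurableSet_Ioi fun r (hr : 0 < r) => ?_
        have hrw : r ^ 2 * w r = r ^ 2 + 3 * π / L * r ^ 1 + 6 * π / L ^ 2 * r ^ 0 := by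
          simp only [w]
          field_simp
        rw [mul_left_comm, ← ENNReal.ofReal_mul (by positivity), hrw,
          ENNReal.ofReal_add (by positivity) (by positivity),
          ENNReal.ofReal_add (by positivity) (by positivity),
          ENNReal.ofReal_mul (by positivity), ENNReal.ofReal_mul (by positivity)]
        ring
      _ = _ := by
        rw [lintegral_add_right _ ((hmeas 0).const_mul _),
          lintegral_add_right _ ((hmeas 1).const_mul _),
          lintegral_const_mul _ (hmeas 0), lintegral_const_mul _ (hmeas 1)]
  have hcoef : ENNReal.ofReal ((L / (2 * Real.pi)) ^ 3) * (ENNReal.ofReal (4 * π) *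
      (J 2 + ENNReal.ofReal (3 * π / L) * J 1 + ENNReal.ofReal (6 * π / L ^ 2) * J 0)) =
      3 * (ENNReal.ofReal (2 / a ^ 1) * J 0) + 3 * (ENNReal.ofReal (2 * π / a ^ 2) * J 1) +
        ENNReal.ofReal (4 * π / a ^ 3) * J 2 := by
    have h0 : ENNReal.ofReal ((L / (2 * Real.pi)) ^ 3) * ENNReal.ofReal (4 * π) *
        ENNReal.ofReal (6 * π / L ^ 2) = 3 * ENNReal.ofReal (2 / a ^ 1) := by
      rw [← ENNReal.ofReal_mul (by positivity), ← ENNReal.ofReal_mul (by positivity),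
        ← ENNReal.ofReal_ofNat 3, ← ENNReal.ofReal_mul (by positivity), ha_def]
      congr 1
      field_simp
      norm_num
    have h1 : ENNReal.ofReal ((L / (2 * Real.pi)) ^ 3) * ENNReal.ofReal (4 * π) *
        ENNReal.ofReal (3 * π / L) = 3 * ENNReal.ofReal (2 * π / a ^ 2) := by
      rw [← ENNReal.ofReal_mul (by positivity), ← ENNReal.ofReal_mul (by positivity),
        ← ENNReal.ofReal_ofNat 3, ← ENNReal.ofReal_mul (by positivity), ha_def]
      congr 1
      field_simp
      norm_num
    have h2 : ENNReal.ofReal ((L / (2 * Real.pi)) ^ 3) * ENNReal.ofReal (4 * π) =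
        ENNReal.ofReal (4 * π / a ^ 3) := by
      rw [← ENNReal.ofReal_mul (by positivity), ha_def]
      congr 1
      field_simp
    rw [← mul_assoc, mul_add, mul_add, ← mul_assoc, ← mul_assoc, h0, h1, h2]
    ring
  calc
    _ ≤ _ := hsum
    _ = 3 * (ENNReal.ofReal (2 / a ^ 1) * J 0) + 3 * (ENNReal.ofReal (2 * π / a ^ 2) * J 1) +
        ENNReal.ofReal (4 * π / a ^ 3) * J 2 := by
      simp [J, Nat.choose]
    _ = _ := by rw [← hcoef, ← hint]
end

section
/- Let β ∈ (0,1] and let μ₀ ≤ 0 satisfy −βμ₀ ≤ c. Then for every integer q ≥ 1 and every δ₁ ∈ (0,1), the sum over lattice points v ∈ 2πℤ³ with β^{−(1−δ₁)/2} ≤ ‖v‖ ≤ β^{−(1+δ₂)/2} of the q-th moment E(N_v^q) of a geometric random variable N_v with ratio e^{−β(‖v‖²−μ₀)} satisfies ∑_v E(N_v^q) ≤ C_q β^{−3/2}(1 + β^{−δ₁(2q−3)/2}). -/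
open Real

/-- The Euclidean norm of the point `2πp ∈ 2πℤ³` for `p ∈ ℤ³`. -/
noncomputable def lnorm3 (p : Fin 3 → ℤ) : ℝ :=
  Real.sqrt (∑ i, ((2 * Real.pi) * (p i : ℝ)) ^ 2)

open Finset in
/-- A finite sum of inverse squares of integers that are at least `r > 0` is at most `2 / r`. -/
lemma sum_inv_sq_le_of_le (F : Finset ℕ) (r : ℝ) (hr : 0 < r) (hF : ∀ k ∈ F, r ≤ k) :
    ∑ k ∈ F, ((k : ℝ) ^ 2)⁻¹ ≤ 2 / r := by
  have hc : 0 < ⌈r⌉₊ := Nat.ceil_pos.mpr hr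
  have hsub : F ⊆ Ioo (⌈r⌉₊ - 1) (F.sup id + 1) := by
    intro k hk
    have h1 : ⌈r⌉₊ ≤ k := Nat.ceil_le.mpr (hF k hk)
    have h2 : k ≤ F.sup id := Finset.le_sup (f := id) hk
    rw [Finset.mem_Ioo]
    omega
  have h3 : (((⌈r⌉₊ - 1 : ℕ) : ℝ) + 1) = (⌈r⌉₊ : ℝ) := by
    rw [Nat.cast_sub hc]; simp
  calc ∑ k ∈ F, ((k : ℝ) ^ 2)⁻¹
      ≤ ∑ k ∈ Ioo (⌈r⌉₊ - 1) (F.sup id + 1), ((k : ℝ) ^ 2)⁻¹ :=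
        Finset.sum_le_sum_of_subset_of_nonneg hsub fun _ _ _ => by positivity
    _ ≤ 2 / (((⌈r⌉₊ - 1 : ℕ) : ℝ) + 1) := sum_Ioo_inv_sq_le _ _
    _ ≤ 2 / r := by
        rw [h3]
        exact div_le_div_of_nonneg_left (by norm_num) hr (Nat.le_ceil r)

/-- The `q`-th moment of a geometric variable of ratio `e^{-x}` is `O(x^{-q} e^{-x/2})`. -/
lemma geometric_moment_le (q : ℕ) (hq : 1 ≤ q) (x : ℝ) (hx : 0 < x) :
    ∑' n : ℕ, (n : ℝ) ^ q * exp (-x * n) * (1 - exp (-x)) ≤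
      2 * (q.factorial * (2 / x) ^ q) * exp (-(x / 2)) := by
  set y := exp (-(x / 2)) with hy
  have hy0 : 0 < y := exp_pos _
  have hy1 : y < 1 := by rw [hy, exp_lt_one_iff]; linarith
  have hyy : exp (-x) = y * y := by rw [hy, ← exp_add]; ring_nf
  have hD : 0 ≤ (q.factorial : ℝ) * (2 / x) ^ q := by positivity
  set D := (q.factorial : ℝ) * (2 / x) ^ q with hDdef
  have hpos : 0 ≤ 1 - y * y := by nlinarith
  have hg : HasSum (fun n : ℕ => D * (y ^ n - if n = 0 then 1 else 0) * (1 - y * y))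
      (D * ((1 - y)⁻¹ - 1) * (1 - y * y)) :=
    (((hasSum_geometric_of_lt_one hy0.le hy1).sub (hasSum_ite_eq 0 1)).mul_left D).mul_right _
  have hle : ∀ n : ℕ, (n : ℝ) ^ q * exp (-x * n) * (1 - exp (-x)) ≤
      D * (y ^ n - if n = 0 then 1 else 0) * (1 - y * y) := by
    intro n
    rw [hyy]
    refine mul_le_mul_of_nonneg_right ?_ hpos
    rcases Nat.eq_zero_or_pos n with rfl | hn
    · simp [show q ≠ 0 by omega]
    · have h1 := Real.pow_div_factorial_le_exp (x / 2 * n) (by positivity) q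
      have h2 : exp (-x * n) = y ^ n * (exp (x / 2 * n))⁻¹ := by
        rw [hy, ← exp_nat_mul, ← exp_neg, ← exp_add]; ring_nf
      have h3 : (n : ℝ) ^ q ≤ D * exp (x / 2 * n) := by
        have h4 : (n : ℝ) ^ q = D * ((x / 2 * n) ^ q / q.factorial) := by
          have h5 : (2 / x) ^ q * (x / 2 * n) ^ q = (n : ℝ) ^ q := by
            rw [← mul_pow]; congr 1; field_simp
          have : (q.factorial : ℝ) ≠ 0 := by positivity
          rw [hDdef, ← h5]; field_simp
        rw [h4]
        exact mul_le_mul_of_nonneg_left h1 hD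
      rw [h2, if_neg hn.ne', sub_zero]
      calc (n : ℝ) ^ q * (y ^ n * (exp (x / 2 * n))⁻¹)
          ≤ D * exp (x / 2 * n) * (y ^ n * (exp (x / 2 * n))⁻¹) :=
            mul_le_mul_of_nonneg_right h3 (by positivity)
        _ = D * y ^ n := by field_simp
  have h0 : ∀ n : ℕ, 0 ≤ (n : ℝ) ^ q * exp (-x * n) * (1 - exp (-x)) := fun n => by
    rw [hyy]; positivity
  have hs := Summable.of_nonneg_of_le h0 hle hg.summable
  refine (hasSum_le hle hs.hasSum hg).trans ?_
  have h1y : 0 < 1 - y := by linarith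
  have : D * ((1 - y)⁻¹ - 1) * (1 - y * y) = D * y * (1 + y) := by field_simp; ring
  rw [this]
  nlinarith [mul_nonneg hD hy0.le]

/-- The sup norm of an integer vector, as a natural number. -/
def supNatAbs (p : Fin 3 → ℤ) : ℕ := Finset.univ.sup fun i => (p i).natAbs

lemma natAbs_le_supNatAbs (p : Fin 3 → ℤ) (i : Fin 3) : (p i).natAbs ≤ supNatAbs p :=
  Finset.le_sup (f := fun i => (p i).natAbs) (Finset.mem_univ i)

lemma exists_natAbs_eq_supNatAbs (p : Fin 3 → ℤ) : ∃ i, (p i).natAbs = supNatAbs p := by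
  obtain ⟨i, _, hi⟩ := Finset.exists_mem_eq_sup Finset.univ Finset.univ_nonempty
    fun i => (p i).natAbs
  exact ⟨i, hi.symm⟩

lemma two_pi_mul_supNatAbs_le_lnorm3 (p : Fin 3 → ℤ) : 2 * π * supNatAbs p ≤ lnorm3 p := by
  obtain ⟨i, hi⟩ := exists_natAbs_eq_supNatAbs p
  refine Real.le_sqrt_of_sq_le ?_
  have h : (2 * π * (supNatAbs p : ℝ)) ^ 2 = (2 * π * (p i : ℝ)) ^ 2 := by
    rw [← hi, Nat.cast_natAbs, Int.cast_abs, mul_pow, sq_abs, mul_pow (2 * π)]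
  rw [h]
  exact Finset.single_le_sum (f := fun i => (2 * π * (p i : ℝ)) ^ 2)
    (fun _ _ => sq_nonneg _) (Finset.mem_univ i)

lemma lnorm3_le_four_pi_mul_supNatAbs (p : Fin 3 → ℤ) : lnorm3 p ≤ 4 * π * supNatAbs p := by
  refine Real.sqrt_le_iff.mpr ⟨by positivity, ?_⟩
  have h : ∀ i, (2 * π * (p i : ℝ)) ^ 2 ≤ (2 * π * (supNatAbs p : ℝ)) ^ 2 := fun i => by
    have h1 : |(p i : ℝ)| ≤ supNatAbs p := by
      have := natAbs_le_supNatAbs p i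
      rw [← Int.cast_abs, ← Nat.cast_natAbs]
      exact_mod_cast this
    rw [mul_pow, mul_pow (2 * π), ← sq_abs (p i : ℝ)]
    gcongr
  calc _ ≤ ∑ _i : Fin 3, (2 * π * (supNatAbs p : ℝ)) ^ 2 := Finset.sum_le_sum fun i _ => h i
    _ ≤ _ := by simp only [Finset.sum_const, Finset.card_univ, Fintype.card_fin, nsmul_eq_mul]
                push_cast
                nlinarith [sq_nonneg (π * (supNatAbs p : ℝ))]

lemma card_filter_supNatAbs_eq_le (s : Finset (Fin 3 → ℤ)) (k : ℕ) (hk : 1 ≤ k) :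
    (s.filter fun p => supNatAbs p = k).card ≤ 54 * k ^ 2 := by
  obtain ⟨m, rfl⟩ : ∃ m, k = m + 1 := ⟨k - 1, by omega⟩
  let box : ℕ → Finset (Fin 3 → ℤ) := fun j => Finset.Icc (fun _ => -(j : ℤ)) fun _ => (j : ℤ)
  have hcard : ∀ j, (box j).card = (2 * j + 1) ^ 3 := fun j => by
    simp only [box, Pi.card_Icc, Int.card_Icc, Finset.prod_const, Finset.card_univ,
      Fintype.card_fin]
    congr 1; omega
  have hsub : (s.filter fun p => supNatAbs p = m + 1) ⊆ box (m + 1) \ box m := by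
    intro p hp
    have hp := (Finset.mem_filter.mp hp).2
    have h := natAbs_le_supNatAbs p
    obtain ⟨i, hi⟩ := exists_natAbs_eq_supNatAbs p
    simp only [box, Finset.mem_sdiff, Finset.mem_Icc, Pi.le_def]
    refine ⟨⟨fun j => ?_, fun j => ?_⟩, fun hj => ?_⟩
    · have := h j; omega
    · have := h j; omega
    · have h1 := hj.1 i
      have h2 := hj.2 i
      omega
  have hbox : box m ⊆ box (m + 1) := by
    refine Finset.Icc_subset_Icc (fun _ => ?_) (fun _ => ?_) <;> simp
  refine (Finset.card_le_card hsub).trans ?_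
  rw [Finset.card_sdiff_of_subset hbox, hcard, hcard, Nat.sub_le_iff_le_add]
  nlinarith

/-- Summation over sup-norm shells, each of which has at most `54 k²` points. -/
lemma sum_comp_supNatAbs_le (s : Finset (Fin 3 → ℤ)) (hs : ∀ p ∈ s, 1 ≤ supNatAbs p)
    (g : ℕ → ℝ) (hg : ∀ k, 0 ≤ g k) :
    ∑ p ∈ s, g (supNatAbs p) ≤ ∑ k ∈ s.image supNatAbs, 54 * (k : ℝ) ^ 2 * g k := by
  rw [Finset.sum_comp]
  refine Finset.sum_le_sum fun k hk => ?_
  obtain ⟨p, hp, rfl⟩ := Finset.mem_image.mp hk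
  rw [nsmul_eq_mul]
  refine mul_le_mul_of_nonneg_right ?_ (hg _)
  exact_mod_cast card_filter_supNatAbs_eq_le s _ (hs p hp)

/-- Summation of `(β k²)^{-q}` over shells of radius at least `r`, for `q = m + 2`. -/
lemma sum_shell_inv_pow_le (m : ℕ) (β r : ℝ) (hβ : 0 < β) (hr : 0 < r) (F : Finset ℕ)
    (hF : ∀ k ∈ F, r ≤ k) :
    ∑ k ∈ F, 54 * (k : ℝ) ^ 2 * ((β * (k : ℝ) ^ 2) ^ (m + 2))⁻¹ ≤
      108 * (β ^ (m + 2))⁻¹ * (r ^ (2 * m + 1))⁻¹ := by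
  have hk : ∀ k ∈ F, 54 * (k : ℝ) ^ 2 * ((β * (k : ℝ) ^ 2) ^ (m + 2))⁻¹ ≤
      54 * (β ^ (m + 2))⁻¹ * (r ^ (2 * m))⁻¹ * ((k : ℝ) ^ 2)⁻¹ := fun k hk => by
    have hrk := hF k hk
    have hk0 : 0 < (k : ℝ) := hr.trans_le hrk
    have h1 : 54 * (k : ℝ) ^ 2 * ((β * (k : ℝ) ^ 2) ^ (m + 2))⁻¹ =
        54 * (β ^ (m + 2))⁻¹ * ((k : ℝ) ^ (2 * m))⁻¹ * ((k : ℝ) ^ 2)⁻¹ := by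
      field_simp; ring
    rw [h1]
    gcongr
  refine (Finset.sum_le_sum hk).trans ?_
  rw [← Finset.mul_sum]
  refine (mul_le_mul_of_nonneg_left (sum_inv_sq_le_of_le F r hr hF) (by positivity)).trans_eq ?_
  field_simp; ring

/-- Summation of `min ((β k²)⁻¹) ((β k²)⁻²)` over all shells. -/
lemma sum_shell_min_le (β : ℝ) (hβ : 0 < β) (F : Finset ℕ) (hF : ∀ k ∈ F, 1 ≤ k) :
    ∑ k ∈ F, 54 * (k : ℝ) ^ 2 * min (β * (k : ℝ) ^ 2)⁻¹ ((β * (k : ℝ) ^ 2) ^ 2)⁻¹ ≤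
      162 * β ^ (-(3 : ℝ) / 2) := by
  set B := β ^ (-(1 : ℝ) / 2) with hB
  have hB0 : 0 < B := rpow_pos_of_pos hβ _
  have hBB : B * B = β⁻¹ := by rw [hB, ← rpow_add hβ, ← rpow_neg_one]; norm_num
  have hB3 : β ^ (-(3 : ℝ) / 2) = B * β⁻¹ := by
    rw [hB, ← rpow_neg_one, ← rpow_add hβ]; norm_num
  rw [← Finset.sum_filter_add_sum_filter_not F fun k : ℕ => (k : ℝ) ≤ B]
  have hsmall : ∑ k ∈ F.filter (fun k : ℕ => (k : ℝ) ≤ B),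
      54 * (k : ℝ) ^ 2 * min (β * (k : ℝ) ^ 2)⁻¹ ((β * (k : ℝ) ^ 2) ^ 2)⁻¹ ≤ 54 * (B * β⁻¹) := by
    have hk : ∀ k ∈ F.filter (fun k : ℕ => (k : ℝ) ≤ B),
        54 * (k : ℝ) ^ 2 * min (β * (k : ℝ) ^ 2)⁻¹ ((β * (k : ℝ) ^ 2) ^ 2)⁻¹ ≤ 54 * β⁻¹ := by
      intro k hk
      have hk0 : 0 < (k : ℝ) := by exact_mod_cast hF k (Finset.mem_filter.mp hk).1
      refine (mul_le_mul_of_nonneg_left (min_le_left _ _) (by positivity)).trans_eq ?_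
      field_simp
    have hcard : ((F.filter (fun k : ℕ => (k : ℝ) ≤ B)).card : ℝ) ≤ B := by
      have hsub : F.filter (fun k : ℕ => (k : ℝ) ≤ B) ⊆ Finset.Icc 1 ⌊B⌋₊ := fun k hk => by
        rw [Finset.mem_filter] at hk
        exact Finset.mem_Icc.mpr ⟨hF k hk.1, Nat.le_floor hk.2⟩
      have := Finset.card_le_card hsub
      rw [Nat.card_Icc, Nat.add_sub_cancel] at this
      exact (Nat.cast_le.mpr this).trans (Nat.floor_le hB0.le)
    refine (Finset.sum_le_card_nsmul _ _ _ hk).trans ?_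
    rw [nsmul_eq_mul]
    refine (mul_le_mul_of_nonneg_right hcard (by positivity)).trans_eq (by ring)
  have hlarge : ∑ k ∈ F.filter (fun k : ℕ => ¬ (k : ℝ) ≤ B),
      54 * (k : ℝ) ^ 2 * min (β * (k : ℝ) ^ 2)⁻¹ ((β * (k : ℝ) ^ 2) ^ 2)⁻¹ ≤
        108 * (B * β⁻¹) := by
    refine (Finset.sum_le_sum fun k _ =>
      mul_le_mul_of_nonneg_left (min_le_right _ _) (by positivity)).trans ?_
    refine (sum_shell_inv_pow_le 0 β B hβ hB0 _ fun k hk => ?_).trans_eq ?_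
    · exact (not_le.mp (Finset.mem_filter.mp hk).2).le
    · have : (β ^ 2)⁻¹ = B * B * β⁻¹ := by rw [hBB]; ring
      simp only [Nat.zero_add, Nat.mul_zero, pow_one]
      rw [this]; field_simp
  rw [hB3]
  linarith

/-- A bound on moments that depends only on the shell passes to the sum over the annulus. -/
lemma tsum_annulus_le (f : (Fin 3 → ℤ) → ℝ) (hf : ∀ v, 0 ≤ f v) (g : ℕ → ℝ) (hg : ∀ k, 0 ≤ g k)
    (hfg : ∀ v, 1 ≤ supNatAbs v → f v ≤ g (supNatAbs v)) (R S T : ℝ) (hR : 0 < R)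
    (hT : ∀ F : Finset ℕ, (∀ k ∈ F, R / 16 ≤ k) → ∑ k ∈ F, 54 * (k : ℝ) ^ 2 * g k ≤ T) :
    ∑' v, (if R ≤ lnorm3 v ∧ lnorm3 v ≤ S then f v else 0) ≤ T := by
  refine Real.tsum_le_of_sum_le (fun v => by split_ifs <;> simp [hf]) fun s => ?_
  rw [← Finset.sum_filter]
  have hmem : ∀ v ∈ s.filter (fun v => R ≤ lnorm3 v ∧ lnorm3 v ≤ S),
      R / 16 ≤ supNatAbs v := fun v hv => by
    have h1 := (Finset.mem_filter.mp hv).2.1.trans (lnorm3_le_four_pi_mul_supNatAbs v)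
    have h2 : π * (supNatAbs v : ℝ) ≤ 4 * supNatAbs v :=
      mul_le_mul_of_nonneg_right pi_le_four (by positivity)
    linarith
  have hone : ∀ v ∈ s.filter (fun v => R ≤ lnorm3 v ∧ lnorm3 v ≤ S),
      1 ≤ supNatAbs v := fun v hv => by
    have : (0 : ℝ) < supNatAbs v := (by positivity : 0 < R / 16).trans_le (hmem v hv)
    exact_mod_cast this
  refine (Finset.sum_le_sum fun v hv => hfg v (hone v hv)).trans ?_
  refine (sum_comp_supNatAbs_le _ hone g hg).trans (hT _ fun k hk => ?_)
  obtain ⟨v, hv, rfl⟩ := Finset.mem_image.mp hk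
  exact hmem v hv

lemma mul_sq_supNatAbs_le (β μ₀ : ℝ) (hβ : 0 < β) (hμ : μ₀ ≤ 0) (v : Fin 3 → ℤ) :
    β * (supNatAbs v : ℝ) ^ 2 ≤ β * (lnorm3 v ^ 2 - μ₀) := by
  have h1 := two_pi_mul_supNatAbs_le_lnorm3 v
  have h2 : (supNatAbs v : ℝ) ≤ 2 * π * supNatAbs v :=
    le_mul_of_one_le_left (by positivity) (by linarith [pi_gt_three])
  have h3 : (supNatAbs v : ℝ) ^ 2 ≤ lnorm3 v ^ 2 :=
    pow_le_pow_left₀ (by positivity) (h2.trans h1) 2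
  exact mul_le_mul_of_nonneg_left (by linarith) hβ.le

/-- for `q ≥ 1`, the sum over lattice points `v ∈ 2πℤ³` in the annulus
`β^{−(1−δ₁)/2} ≤ ‖v‖ ≤ β^{−(1+δ₂)/2}` of the `q`-th moment of a geometric random
variable with ratio `e^{−β(‖v‖²−μ₀)}` is bounded by
`C β^{−3/2}(1 + β^{−δ₁(2q−3)/2})`. -/
theorem stmt_18 (q : ℕ) (hq : 1 ≤ q) (δ₁ δ₂ c : ℝ) (h1 : 0 < δ₁) (h1' : δ₁ < 1)
    (h2 : 0 < δ₂) (hc : 0 < c) :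
    ∃ C > (0:ℝ), ∀ β μ₀ : ℝ, 0 < β → β ≤ 1 → μ₀ ≤ 0 → -(β * μ₀) ≤ c →
      (∑' v : Fin 3 → ℤ,
        if β ^ (-(1 - δ₁) / 2) ≤ lnorm3 v ∧ lnorm3 v ≤ β ^ (-(1 + δ₂) / 2) then
          ∑' n : ℕ, (n : ℝ) ^ q * Real.exp (-β * (lnorm3 v ^ 2 - μ₀) * n) *
            (1 - Real.exp (-β * (lnorm3 v ^ 2 - μ₀)))
        else 0) ≤
      C * β ^ (-(3:ℝ) / 2) * (1 + β ^ (-(δ₁ * (2 * (q:ℝ) - 3) / 2))) := by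
  have hmom : ∀ β μ₀ : ℝ, 0 < β → μ₀ ≤ 0 → ∀ v, 0 ≤ ∑' n : ℕ, (n : ℝ) ^ q *
      Real.exp (-β * (lnorm3 v ^ 2 - μ₀) * n) * (1 - Real.exp (-β * (lnorm3 v ^ 2 - μ₀))) := by
    intro β μ₀ hβ hμ v
    have hx : 0 ≤ β * (lnorm3 v ^ 2 - μ₀) :=
      mul_nonneg hβ.le (by nlinarith [sq_nonneg (lnorm3 v)])
    have h1 : Real.exp (-β * (lnorm3 v ^ 2 - μ₀)) ≤ 1 := exp_le_one_iff.mpr (by linarith)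
    exact tsum_nonneg fun n => mul_nonneg (by positivity) (by linarith)
  set A : ℝ := 2 * (q.factorial * 2 ^ q) with hA
  have hA0 : 0 < A := by positivity
  have hmom_le : ∀ β μ₀ : ℝ, 0 < β → μ₀ ≤ 0 → ∀ v, 1 ≤ supNatAbs v →
      ∑' n : ℕ, (n : ℝ) ^ q * Real.exp (-β * (lnorm3 v ^ 2 - μ₀) * n) *
        (1 - Real.exp (-β * (lnorm3 v ^ 2 - μ₀))) ≤
      A * ((β * (supNatAbs v : ℝ) ^ 2) ^ q)⁻¹ *
        Real.exp (-(β * (supNatAbs v : ℝ) ^ 2 / 2)) := by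
    intro β μ₀ hβ hμ v hv
    have hle := mul_sq_supNatAbs_le β μ₀ hβ hμ v
    have hv0 : (0 : ℝ) < supNatAbs v := by exact_mod_cast hv
    have hz : 0 < β * (supNatAbs v : ℝ) ^ 2 := by positivity
    have h := geometric_moment_le q hq _ (hz.trans_le hle)
    simp only [neg_mul] at h ⊢
    refine h.trans ?_
    rw [div_pow, div_eq_mul_inv, ← mul_assoc, ← mul_assoc, mul_assoc 2, ← hA]
    gcongr
  rcases Nat.lt_or_ge q 2 with hq2 | hq2
  · obtain rfl : q = 1 := by omega
    refine ⟨2 * A * 162, by positivity, fun β μ₀ hβ hβ1 hμ _ => ?_⟩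
    refine (tsum_annulus_le _ (hmom β μ₀ hβ hμ)
      (fun k => 2 * A * min (β * (k : ℝ) ^ 2)⁻¹ ((β * (k : ℝ) ^ 2) ^ 2)⁻¹)
      (fun k => by positivity) (fun v hv => ?_) _ _ (2 * A * (162 * β ^ (-(3 : ℝ) / 2)))
      (rpow_pos_of_pos hβ _) fun F hF => ?_).trans ?_
    · refine (hmom_le β μ₀ hβ hμ v hv).trans ?_
      have hv0 : (0 : ℝ) < supNatAbs v := by exact_mod_cast hv
      have hz : 0 < β * (supNatAbs v : ℝ) ^ 2 := by positivity
      set z := β * (supNatAbs v : ℝ) ^ 2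
      have he1 : Real.exp (-(z / 2)) ≤ 1 := exp_le_one_iff.mpr (by linarith)
      have he2 : Real.exp (-(z / 2)) ≤ 2 * z⁻¹ := by
        rw [exp_neg]
        refine (inv_anti₀ (by positivity) (add_one_le_exp (z / 2))).trans ?_
        rw [← div_eq_mul_inv, inv_eq_one_div, div_le_div_iff₀ (by positivity) hz]
        linarith
      rw [mul_min_of_nonneg _ _ (by positivity), pow_one]
      refine le_min ?_ ?_
      · calc A * z⁻¹ * Real.exp (-(z / 2)) ≤ A * z⁻¹ * 1 := by gcongr
          _ ≤ 2 * A * z⁻¹ := by nlinarith [mul_pos hA0 (inv_pos.mpr hz)]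
      · calc A * z⁻¹ * Real.exp (-(z / 2)) ≤ A * z⁻¹ * (2 * z⁻¹) := by gcongr
          _ = 2 * A * (z ^ 2)⁻¹ := by field_simp
    · have hF1 : ∀ k ∈ F, 1 ≤ k := fun k hk => by
        have : (0 : ℝ) < k :=
          (div_pos (rpow_pos_of_pos hβ _) (by norm_num)).trans_le (hF k hk)
        exact_mod_cast this
      refine le_of_eq_of_le ?_
        (mul_le_mul_of_nonneg_left (sum_shell_min_le β hβ F hF1) (by positivity : 0 ≤ 2 * A))
      rw [Finset.mul_sum]
      exact Finset.sum_congr rfl fun k _ => by ring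
    · rw [← mul_assoc]
      exact le_mul_of_one_le_right (by positivity)
        (le_add_of_nonneg_right (rpow_nonneg hβ.le _))
  · obtain ⟨m, rfl⟩ : ∃ m, q = m + 2 := ⟨q - 2, by omega⟩
    refine ⟨A * (108 * 16 ^ (2 * m + 1)), by positivity, fun β μ₀ hβ hβ1 hμ _ => ?_⟩
    set R := β ^ (-(1 - δ₁) / 2) with hR
    have hR0 : 0 < R := rpow_pos_of_pos hβ _
    refine (tsum_annulus_le _ (hmom β μ₀ hβ hμ)
      (fun k => A * ((β * (k : ℝ) ^ 2) ^ (m + 2))⁻¹)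
      (fun k => by positivity) (fun v hv => ?_) _ _
      (A * (108 * (β ^ (m + 2))⁻¹ * ((R / 16) ^ (2 * m + 1))⁻¹)) hR0 fun F hF => ?_).trans ?_
    · refine (hmom_le β μ₀ hβ hμ v hv).trans (mul_le_of_le_one_right (by positivity) ?_)
      exact exp_le_one_iff.mpr (neg_nonpos.mpr (by positivity))
    · refine le_of_eq_of_le ?_ (mul_le_mul_of_nonneg_left
        (sum_shell_inv_pow_le m β (R / 16) hβ (by positivity) F hF) hA0.le)
      rw [Finset.mul_sum]
      exact Finset.sum_congr rfl fun k _ => by ring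
    · have hexp : (β ^ (m + 2))⁻¹ * (R ^ (2 * m + 1))⁻¹ = β ^ (-(3 : ℝ) / 2) *
          β ^ (-(δ₁ * (2 * ((m + 2 : ℕ) : ℝ) - 3) / 2)) := by
        rw [hR, ← rpow_natCast, ← rpow_natCast, ← rpow_mul hβ.le, ← rpow_neg hβ.le,
          ← rpow_neg hβ.le, ← rpow_add hβ, ← rpow_add hβ]
        congr 1
        push_cast
        ring
      have hb := rpow_pos_of_pos hβ (-(3 : ℝ) / 2)
      calc A * (108 * (β ^ (m + 2))⁻¹ * ((R / 16) ^ (2 * m + 1))⁻¹)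
          = A * (108 * 16 ^ (2 * m + 1)) * ((β ^ (m + 2))⁻¹ * (R ^ (2 * m + 1))⁻¹) := by
            rw [div_pow]; field_simp
        _ ≤ _ := by
            rw [hexp, mul_assoc (A * _)]
            gcongr
            linarith
end
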